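/- arXiv:math/0604339 — 2 statements merged into one kernel-verified Lean document; each statement's English description precedes it below -/
import Mathlib

section
/- Let χ : K^× → ℤ/2ℤ be a group homomorphism whose kernel equals the norm group N_{L|K}(L^×), and let n ≥ 1 be such that χ vanishes on U_{n+1} but does not vanish identically on U_n. If e₁/e₂ ∈ U_{2n+1} (i.e. e₁ ≡ e₂ mod 𝔭^{2n+1}) and χ(e₁) = 0, then the subgroup of (ℤ/2ℤ)² generated by the set Im equals {0} × ℤ/2ℤ. -/
/-- An additively written, normalized (i.e. surjective onto `ℤ`) discrete
valuation on a field `K`.  All axioms are imposed at nonzero arguments only,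
so the value of `v` at `0` is irrelevant.  For a finite extension `K` of
`ℚ_[p]`, the normalized valuation `v : K^× → ℤ` of the paper is such a
structure. -/
structure DValuation (K : Type*) [Field K] where
  /-- the valuation map -/
  v : K → ℤ
  v_mul : ∀ ⦃x y : K⦄, x ≠ 0 → y ≠ 0 → v (x * y) = v x + v y
  min_le_v_add : ∀ ⦃x y : K⦄, x ≠ 0 → y ≠ 0 → x + y ≠ 0 → min (v x) (v y) ≤ v (x + y)
  v_surj : ∀ m : ℤ, ∃ x : K, x ≠ 0 ∧ v x = m

namespace DValuation

variable {K : Type*} [Field K] (w : DValuation K)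

/-- `u ∈ U_m` : `u` is (a unit) congruent to `1` modulo `𝔭^m`; for `m ≥ 1`
this forces `v u = 0`, i.e. `u ∈ 𝔬^×`. -/
def IsUnit₁ (m : ℤ) (u : K) : Prop :=
  u = 1 ∨ m ≤ w.v (u - 1)

end DValuation

/-!
The quadratic character `χ` vanishes on the ball `v (u - 1) < γ` (`γ = exp (-n)` for `U_{n+1}`) and
is nontrivial on units; hence `χ (a + b) = χ a` as soon as `v b < γ * v a`. Suppose that
`χ (x (x - e₁) (x - e₂)) = 0`. Either `x` is so close to `e₂` that `χ x = χ e₂ = 0`, or `x` is so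
far from it, compared with `v (e₁ - e₂) < γ ^ 2 * v e₂`, that `χ (x - e₁) = χ (x - e₂)` and the
last two factors cancel. So `Im` lies in `{0} × ℤ/2ℤ`. The element `(0, 1)` comes from the root
`x = 0` if `χ (-1) ≠ 0`, and otherwise from `x = e₁ (1 + t)`, where `t` is one of `u`, `u⁻¹` for a
unit `u` with `χ u ≠ 0`.
-/

/-- `χ` restricts to a homomorphism from the units of `M` to the additive group `A`; nothing is
required of the value `χ 0`. -/
def IsUnitsHom {M A : Type*} [GroupWithZero M] [AddGroup A] (χ : M → A) : Prop :=
  ∀ ⦃x y : M⦄, x ≠ 0 → y ≠ 0 → χ (x * y) = χ x + χ y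

namespace IsUnitsHom

variable {M A : Type*} [GroupWithZero M] [AddGroup A] {χ : M → A}

lemma map_one (hχ : IsUnitsHom χ) : χ 1 = 0 := by
  simpa using hχ (one_ne_zero (α := M)) one_ne_zero

lemma map_div (hχ : IsUnitsHom χ) {x y : M} (hx : x ≠ 0) (hy : y ≠ 0) :
    χ (x / y) = χ x - χ y := by
  rw [eq_sub_iff_add_eq, ← hχ (div_ne_zero hx hy) hy, div_mul_cancel₀ x hy]

end IsUnitsHom

lemma addSubgroup_closure_eq_bot_prod_top {G : Type*} [AddGroup G] {m : ℕ} {S : Set (G × ZMod m)}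
    (hfst : ∀ p ∈ S, p.1 = 0) (hmem : ((0 : G), (1 : ZMod m)) ∈ S) :
    AddSubgroup.closure S = AddSubgroup.prod ⊥ ⊤ := by
  refine le_antisymm ((AddSubgroup.closure_le _).2 fun p hp ↦ ⟨hfst p hp, trivial⟩) ?_
  rintro ⟨a, b⟩ ⟨rfl : a = 0, -⟩
  have hb : ((0 : G), b) = (b.cast : ℤ) • ((0 : G), (1 : ZMod m)) := by simp
  rw [hb]
  exact zsmul_mem (AddSubgroup.subset_closure hmem) _

/-- The image of the descent map of the Châtelet surface `y² - d z² = x (x - e₁) (x - e₂)`, with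
`χ` standing for the norm residue symbol of `K(√d)`. The four listed pairs are the values at
infinity and at the roots `0`, `e₁`, `e₂` of the cubic, kept apart because `χ 0` has no meaning. -/
def descentImage {K : Type*} [Field K] (χ : K → ZMod 2) (e₁ e₂ : K) : Set (ZMod 2 × ZMod 2) :=
  {(0, 0), (χ (e₁ * e₂), χ (-e₁)), (χ e₁, χ (e₁ * (e₁ - e₂))), (χ e₂, χ (e₂ - e₁))} ∪
    {p | ∃ x : K, x ≠ 0 ∧ x ≠ e₁ ∧ x ≠ e₂ ∧
      χ (x * (x - e₁) * (x - e₂)) = 0 ∧ p = (χ x, χ (x - e₁))}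

section Valuation

variable {Γ₀ : Type*} [LinearOrderedCommGroupWithZero Γ₀] {γ : Γ₀}

section Ring

variable {R : Type*} [Ring R] {v : Valuation R Γ₀}

lemma valuation_eq_one_of_valuation_sub_one_lt_one {u : R} (hu : v (u - 1) < 1) : v u = 1 := by
  rw [← v.map_one_add_of_lt hu, add_sub_cancel]

lemma ne_zero_of_valuation_lt_mul {a b : R} (h : v b < γ * v a) : a ≠ 0 := by
  rintro rfl
  simp at h

lemma add_ne_zero_of_valuation_lt_mul (hγ : γ ≤ 1) {a b : R} (h : v b < γ * v a) :
    a + b ≠ 0 := by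
  intro hab
  have hva : v (a + b) = v a := v.map_add_eq_of_lt_left (h.trans_le (mul_le_of_le_one_left' hγ))
  rw [← hva, hab, map_zero, mul_zero] at h
  exact not_lt_zero h

lemma le_one_of_map_ne_zero_of_valuation_eq_one {A : Type*} [Zero A] {χ : R → A}
    (hvan : ∀ u, v (u - 1) < γ → χ u = 0) {u : R} (hu : v u = 1) (hχu : χ u ≠ 0) : γ ≤ 1 :=
  (not_lt.1 (mt (hvan u) hχu)).trans (v.map_sub_le hu.le v.map_one.le)

end Ring

variable {K : Type*} [Field K] {v : Valuation K Γ₀}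

lemma IsUnitsHom.map_add_of_lt {A : Type*} [AddGroup A] {χ : K → A} (hχ : IsUnitsHom χ)
    (hγ : γ ≤ 1) (hvan : ∀ u, v (u - 1) < γ → χ u = 0) {a b : K} (h : v b < γ * v a) :
    χ (a + b) = χ a := by
  have ha : a ≠ 0 := ne_zero_of_valuation_lt_mul h
  have hquot : χ ((a + b) / a) = 0 := by
    apply hvan
    rwa [add_div, div_self ha, add_sub_cancel_left, map_div₀, div_lt_iff₀ (v.pos_iff.2 ha)]
  rwa [hχ.map_div (add_ne_zero_of_valuation_lt_mul hγ h) ha, sub_eq_zero] at hquot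

variable {χ : K → ZMod 2} {e₁ e₂ : K}

lemma map_eq_zero_of_map_cubic_eq_zero (hχ : IsUnitsHom χ) (hγ : γ ≤ 1)
    (hvan : ∀ u, v (u - 1) < γ → χ u = 0) (he : v (e₁ - e₂) < γ ^ 2 * v e₂) (hχe₂ : χ e₂ = 0)
    {x : K} (hx : x ≠ 0) (hx₁ : x ≠ e₁) (hx₂ : x ≠ e₂)
    (hcubic : χ (x * (x - e₁) * (x - e₂)) = 0) : χ x = 0 := by
  rcases lt_or_ge (v (x - e₂)) (γ * v e₂) with hnear | hfar
  · rw [← hχe₂, ← hχ.map_add_of_lt hγ hvan hnear, add_sub_cancel]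
  · have hclose : v (e₂ - e₁) < γ * v (x - e₂) := by
      rw [sq, mul_assoc, v.map_sub_swap] at he
      exact he.trans_le (mul_le_mul_right hfar γ)
    have hfactors : χ (x - e₁) = χ (x - e₂) := by
      rw [← hχ.map_add_of_lt hγ hvan hclose, sub_add_sub_cancel]
    rwa [hχ (mul_ne_zero hx (sub_ne_zero.2 hx₁)) (sub_ne_zero.2 hx₂),
      hχ hx (sub_ne_zero.2 hx₁), hfactors, add_assoc, CharTwo.add_self_eq_zero, add_zero] at hcubic

lemma fst_eq_zero_of_mem_descentImage (hχ : IsUnitsHom χ) (hγ : γ ≤ 1)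
    (hvan : ∀ u, v (u - 1) < γ → χ u = 0) (he : v (e₁ - e₂) < γ ^ 2 * v e₂)
    (he₁ : e₁ ≠ 0) (hχe₁ : χ e₁ = 0) (hχe₂ : χ e₂ = 0) :
    ∀ p ∈ descentImage χ e₁ e₂, p.1 = 0 := by
  rintro p ((rfl | rfl | rfl | rfl) | ⟨x, hx, hx₁, hx₂, hcubic, rfl⟩)
  · rfl
  · rw [hχ he₁ (ne_zero_of_valuation_lt_mul he), hχe₁, hχe₂, add_zero]
  · exact hχe₁
  · exact hχe₂
  · exact map_eq_zero_of_map_cubic_eq_zero hχ hγ hvan he hχe₂ hx hx₁ hx₂ hcubic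

lemma exists_map_eq_one_and_map_one_add_eq_zero (hχ : IsUnitsHom χ) (hneg : χ (-1) = 0)
    (hnonvan : ∃ u, v u = 1 ∧ χ u ≠ 0) :
    ∃ t, v t = 1 ∧ 1 + t ≠ 0 ∧ χ t = 1 ∧ χ (1 + t) = 0 := by
  obtain ⟨u, hu, hχu⟩ := hnonvan
  have hu₀ : u ≠ 0 := v.ne_zero_iff.1 (hu ▸ one_ne_zero)
  have hu₁ : 1 + u ≠ 0 := fun h ↦ hχu (eq_neg_of_add_eq_zero_right h ▸ hneg)
  replace hχu : χ u = 1 := Fin.eq_one_of_ne_zero _ hχu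
  by_cases hχu₁ : χ (1 + u) = 0
  · exact ⟨u, hu, hu₁, hχu, hχu₁⟩
  · replace hχu₁ : χ (1 + u) = 1 := Fin.eq_one_of_ne_zero _ hχu₁
    have hinv : 1 + 1 / u = (1 + u) / u := by field_simp; ring
    refine ⟨1 / u, by simp [hu], hinv ▸ div_ne_zero hu₁ hu₀, ?_, ?_⟩
    · rw [hχ.map_div one_ne_zero hu₀, hχ.map_one, hχu]
      rfl
    · rw [hinv, hχ.map_div hu₁ hu₀, hχu₁, hχu, sub_self]

lemma zero_one_mem_descentImage_of_map_neg_one (hχ : IsUnitsHom χ) (hneg : χ (-1) = 1)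
    (he₁ : e₁ ≠ 0) (he₂ : e₂ ≠ 0) (hχe₁ : χ e₁ = 0) (hχe₂ : χ e₂ = 0) :
    (0, 1) ∈ descentImage χ e₁ e₂ := by
  have hroot : (χ (e₁ * e₂), χ (-e₁)) = (0, 1) := by
    rw [hχ he₁ he₂, neg_eq_neg_one_mul, hχ (neg_ne_zero.2 one_ne_zero) he₁, hχe₁, hχe₂, hneg,
      add_zero, add_zero]
  exact .inl (.inr (.inl hroot.symm))

lemma mul_one_add_mem_descentImage (hχ : IsUnitsHom χ) (hγ : γ ≤ 1)
    (hvan : ∀ u, v (u - 1) < γ → χ u = 0) (he : v (e₁ - e₂) < γ * v e₁) (hχe₁ : χ e₁ = 0)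
    {t : K} (ht : v t = 1) (ht₁ : 1 + t ≠ 0) (hχt₁ : χ (1 + t) = 0) :
    (0, χ t) ∈ descentImage χ e₁ e₂ := by
  have he₁ : e₁ ≠ 0 := ne_zero_of_valuation_lt_mul he
  have ht₀ : t ≠ 0 := v.ne_zero_iff.1 (ht ▸ one_ne_zero)
  have he₁t : e₁ * t ≠ 0 := mul_ne_zero he₁ ht₀
  have hx : e₁ * (1 + t) ≠ 0 := mul_ne_zero he₁ ht₁
  have hclose : v (e₁ - e₂) < γ * v (e₁ * t) := by rwa [map_mul, ht, mul_one]
  have hsub₁ : e₁ * (1 + t) - e₁ = e₁ * t := by ring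
  have hsub₂ : e₁ * (1 + t) - e₂ = e₁ * t + (e₁ - e₂) := by ring
  have hne : e₁ * t + (e₁ - e₂) ≠ 0 := add_ne_zero_of_valuation_lt_mul hγ hclose
  have hχx : χ (e₁ * (1 + t)) = 0 := by rw [hχ he₁ ht₁, hχe₁, hχt₁, add_zero]
  have hcubic : χ (e₁ * (1 + t) * (e₁ * t) * (e₁ * t + (e₁ - e₂))) = 0 := by
    rw [hχ (mul_ne_zero hx he₁t) hne, hχ hx he₁t, hχ.map_add_of_lt hγ hvan hclose, hχx, zero_add,
      CharTwo.add_self_eq_zero]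
  refine .inr ⟨e₁ * (1 + t), hx, sub_ne_zero.1 (hsub₁ ▸ he₁t), sub_ne_zero.1 (hsub₂ ▸ hne), ?_, ?_⟩
  · rwa [hsub₁, hsub₂]
  · rw [hχx, hsub₁, hχ he₁ ht₀, hχe₁, zero_add]

lemma zero_one_mem_descentImage (hχ : IsUnitsHom χ) (hγ : γ ≤ 1)
    (hvan : ∀ u, v (u - 1) < γ → χ u = 0) (hnonvan : ∃ u, v u = 1 ∧ χ u ≠ 0)
    (he : v (e₁ - e₂) < γ * v e₁) (he₂ : e₂ ≠ 0) (hχe₁ : χ e₁ = 0) (hχe₂ : χ e₂ = 0) :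
    (0, 1) ∈ descentImage χ e₁ e₂ := by
  by_cases hneg : χ (-1) = 0
  · obtain ⟨t, ht, ht₁, hχt, hχt₁⟩ := exists_map_eq_one_and_map_one_add_eq_zero hχ hneg hnonvan
    exact hχt ▸ mul_one_add_mem_descentImage hχ hγ hvan he hχe₁ ht ht₁ hχt₁
  · exact zero_one_mem_descentImage_of_map_neg_one hχ (Fin.eq_one_of_ne_zero _ hneg)
      (ne_zero_of_valuation_lt_mul he) he₂ hχe₁ hχe₂

theorem chatelet_descent_image_case_i_general (hχ : IsUnitsHom χ)
    (hvan : ∀ u, v (u - 1) < γ → χ u = 0) (hnonvan : ∃ u, v u = 1 ∧ χ u ≠ 0)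
    (hcong : v (e₁ / e₂ - 1) < γ ^ 2) (hχe₁ : χ e₁ = 0) :
    AddSubgroup.closure (descentImage χ e₁ e₂) = AddSubgroup.prod ⊥ ⊤ := by
  have hγ : γ ≤ 1 :=
    let ⟨_, hu, hχu⟩ := hnonvan
    le_one_of_map_ne_zero_of_valuation_eq_one hvan hu hχu
  have hunit : v (e₁ / e₂) = 1 :=
    valuation_eq_one_of_valuation_sub_one_lt_one (hcong.trans_le (pow_le_one' hγ 2))
  obtain ⟨he₁, he₂⟩ := div_ne_zero_iff.1 (v.ne_zero_iff.1 (hunit ▸ one_ne_zero))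
  have hv : v e₁ = v e₂ := by rwa [map_div₀, div_eq_one_iff_eq (v.ne_zero_iff.2 he₂)] at hunit
  have he : v (e₁ - e₂) < γ ^ 2 * v e₂ := by
    rwa [← div_lt_iff₀ (v.pos_iff.2 he₂), ← map_div₀, sub_div, div_self he₂]
  have he_lt : v (e₁ - e₂) < γ * v e₁ := by
    rw [hv]
    exact he.trans_le (mul_le_mul_left (pow_le_of_le_one zero_le hγ two_ne_zero) _)
  have hχe₂ : χ e₂ = 0 := by
    rw [v.map_sub_swap] at he_lt
    rw [← hχe₁, ← hχ.map_add_of_lt hγ hvan he_lt, add_sub_cancel]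
  exact addSubgroup_closure_eq_bot_prod_top
    (fst_eq_zero_of_mem_descentImage hχ hγ hvan he he₁ hχe₁ hχe₂)
    (zero_one_mem_descentImage hχ hγ hvan hnonvan he_lt he₂ hχe₁ hχe₂)

end Valuation

namespace DValuation

open WithZero

variable {K : Type*} [Field K] (w : DValuation K)

lemma v_one : w.v 1 = 0 := by
  simpa using w.v_mul (one_ne_zero (α := K)) one_ne_zero

open Classical in
/-- The multiplicative valuation `x ↦ exp (-w.v x)`, sending `0` to `0` whatever `w.v 0` is. -/
noncomputable def toValuation : Valuation K ℤᵐ⁰ where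
  toFun x := if x = 0 then 0 else exp (-w.v x)
  map_zero' := if_pos rfl
  map_one' := by simp [w.v_one]
  map_mul' x y := by
    rcases eq_or_ne x 0 with rfl | hx
    · simp
    rcases eq_or_ne y 0 with rfl | hy
    · simp
    rw [if_neg (mul_ne_zero hx hy), if_neg hx, if_neg hy, w.v_mul hx hy, neg_add, exp_add]
  map_add_le_max' x y := by
    rcases eq_or_ne x 0 with rfl | hx
    · simp
    rcases eq_or_ne y 0 with rfl | hy
    · simp
    rcases eq_or_ne (x + y) 0 with hxy | hxy
    · simp [hxy]
    rw [if_neg hx, if_neg hy, if_neg hxy, le_max_iff, exp_le_exp, exp_le_exp, neg_le_neg_iff,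
      neg_le_neg_iff, ← min_le_iff]
    exact w.min_le_v_add hx hy hxy

lemma toValuation_apply {x : K} (hx : x ≠ 0) : w.toValuation x = exp (-w.v x) :=
  if_neg hx

variable {w}

lemma isUnit₁_add_one_iff {m : ℤ} {u : K} :
    w.IsUnit₁ (m + 1) u ↔ w.toValuation (u - 1) < exp (-m) := by
  rcases eq_or_ne u 1 with rfl | hu
  · simp [IsUnit₁]
  · rw [IsUnit₁, or_iff_right hu, toValuation_apply w (sub_ne_zero.2 hu), exp_lt_exp,
      neg_lt_neg_iff, Int.add_one_le_iff]

lemma IsUnit₁.mono {l m : ℤ} (hlm : l ≤ m) {u : K} (hu : w.IsUnit₁ m u) : w.IsUnit₁ l u :=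
  hu.imp_right hlm.trans

lemma IsUnit₁.toValuation_eq_one {m : ℤ} (hm : 1 ≤ m) {u : K} (hu : w.IsUnit₁ m u) :
    w.toValuation u = 1 :=
  valuation_eq_one_of_valuation_sub_one_lt_one (isUnit₁_add_one_iff (m := 0).1 (hu.mono hm))

end DValuation

/-- Case (i) of Proposition 4:  `K` a finite extension of `ℚ₂` with normalized
valuation `v`, `L = K(√d)` a ramified quadratic extension, `χ : K^× → ℤ/2ℤ`
the homomorphism with kernel `N_{L|K}(L^×)`, factoring through `U₁/U_{n+1}`
but not through `U₁/U_n` (`n ≥ 1`), and `e₁, e₂` distinct `1`-units.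
If `e₁/e₂ ∈ U_{2n+1}` and `χ(e₁) = 0`, the subgroup of `(ℤ/2ℤ)²` generated by
the image set `Im` is `{0} × ℤ/2ℤ`. -/
theorem chatelet_descent_image_case_i
    (K : Type*) [Field K] [Algebra ℚ_[2] K] [FiniteDimensional ℚ_[2] K]
    (w : DValuation K)
    (hext : ∀ x : ℚ_[2], x ≠ 0 →
      w.v (algebraMap ℚ_[2] K x) = w.v (algebraMap ℚ_[2] K 2) * x.valuation)
    (L : Type*) [Field L] [Algebra K L] (hL2 : Module.finrank K L = 2)
    (d : K) (hd0 : d ≠ 0) (hd : ¬ IsSquare d)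
    (hdL : ∃ δ : L, δ ^ 2 = algebraMap K L d)
    (wL : DValuation L)
    (hram : ∀ x : K, x ≠ 0 → wL.v (algebraMap K L x) = 2 * w.v x)
    (χ : K → ZMod 2)
    (hχ : ∀ ⦃x y : K⦄, x ≠ 0 → y ≠ 0 → χ (x * y) = χ x + χ y)
    (hker : ∀ x : K, x ≠ 0 → (χ x = 0 ↔ ∃ y : L, y ≠ 0 ∧ Algebra.norm K y = x))
    (n : ℕ) (hn : 1 ≤ n)
    (hvan : ∀ u : K, w.IsUnit₁ ((n : ℤ) + 1) u → χ u = 0)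
    (hnonvan : ∃ u : K, w.IsUnit₁ (n : ℤ) u ∧ χ u ≠ 0)
    (e₁ e₂ : K) (he₁ : w.IsUnit₁ 1 e₁) (he₂ : w.IsUnit₁ 1 e₂) (hee : e₁ ≠ e₂)
    (hcong : w.IsUnit₁ (2 * (n : ℤ) + 1) (e₁ / e₂))
    (hχe₁ : χ e₁ = 0) :
    AddSubgroup.closure
        (({((0 : ZMod 2), (0 : ZMod 2)), (χ (e₁ * e₂), χ (-e₁)),
            (χ e₁, χ (e₁ * (e₁ - e₂))), (χ e₂, χ (e₂ - e₁))} : Set (ZMod 2 × ZMod 2)) ∪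
          {p : ZMod 2 × ZMod 2 | ∃ x : K, x ≠ 0 ∧ x ≠ e₁ ∧ x ≠ e₂ ∧
            χ (x * (x - e₁) * (x - e₂)) = 0 ∧ p = (χ x, χ (x - e₁))}) =
      AddSubgroup.prod (⊥ : AddSubgroup (ZMod 2)) (⊤ : AddSubgroup (ZMod 2)) := by
  exact chatelet_descent_image_case_i_general (v := w.toValuation) (γ := WithZero.exp (-(n : ℤ))) hχ
    (fun u hu ↦ hvan u (DValuation.isUnit₁_add_one_iff.2 hu))
    (hnonvan.imp fun u hu ↦ ⟨hu.1.toValuation_eq_one (by exact_mod_cast hn), hu.2⟩)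
    (by simpa [two_mul, sq] using DValuation.isUnit₁_add_one_iff.1 hcong) hχe₁
end

section
/- Let k be a finite field with q elements, let h ⊆ k be a subgroup of the additive group of k with exactly q/2 elements (an index-2 subgroup), and let s ∈ k^× be a nonzero element. Then there exists t ∈ k with t ∉ h and s·t⁻¹ ∉ h. -/
/-!
If every `t ∉ A` satisfied `s * t⁻¹ ∈ A`, then, since `0 ∈ A` and `s ≠ 0`, the injection
`t ↦ s * t⁻¹` would map `Aᶜ` into `A \ {0}`. For a finite `A` this is impossible as soon as `Aᶜ`
has at least as many elements as `A`.
-/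

theorem exists_mem_apply_notMem_of_injOn_of_encard_lt {α β : Type*} {f : α → β} {A : Set α}
    {B : Set β} (hf : A.InjOn f) (hcard : B.encard < A.encard) : ∃ a ∈ A, f a ∉ B := by
  by_contra! hmaps
  exact hcard.not_ge (Set.encard_le_encard_of_injOn hmaps hf)

theorem encard_le_encard_compl_of_two_mul_ncard_le {α : Type*} [Finite α] {A : Set α}
    (hA : 2 * A.ncard ≤ Nat.card α) : A.encard ≤ Aᶜ.encard := by
  rw [← A.toFinite.cast_ncard_eq, ← Aᶜ.toFinite.cast_ncard_eq, Nat.cast_le]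
  have hsum := A.ncard_add_ncard_compl
  omega

theorem mul_inv_injective₀ {G₀ : Type*} [GroupWithZero G₀] {s : G₀} (hs : s ≠ 0) :
    Function.Injective fun t : G₀ ↦ s * t⁻¹ :=
  (mul_right_injective₀ hs).comp inv_injective

theorem exists_teichmuller_pair_outside_subgroup_general {G₀ : Type*} [GroupWithZero G₀]
    {A : Set G₀} (hA : A.Finite) (hzero : 0 ∈ A) (hcard : A.encard ≤ Aᶜ.encard)
    {s : G₀} (hs : s ≠ 0) : ∃ t, t ∉ A ∧ s * t⁻¹ ∉ A := by
  have hlt : (A \ {0}).encard < Aᶜ.encard :=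
    (hA.sdiff.encard_lt_encard (Set.sdiff_singleton_ssubset.mpr hzero)).trans_le hcard
  obtain ⟨t, ht, hst⟩ :=
    exists_mem_apply_notMem_of_injOn_of_encard_lt (mul_inv_injective₀ hs).injOn hlt
  have ht0 : t ≠ 0 := (ne_of_mem_of_not_mem hzero ht).symm
  exact ⟨t, ht, fun hmem ↦ hst ⟨hmem, mul_ne_zero hs (inv_ne_zero ht0)⟩⟩

/-- The counting argument ("saved by the skin of our teeth"):  if `k` is a
finite field with `q` elements, `h ⊆ k` is a subgroup of the additive group
of `k` with exactly `q/2` elements (an index-2 subgroup), and `s ∈ k^×`,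
then there exists `t ∈ k` with `t ∉ h` and `s·t⁻¹ ∉ h`. -/
theorem exists_teichmuller_pair_outside_subgroup
    (k : Type*) [Field k] [Fintype k] (q : ℕ) (hq : Nat.card k = q)
    (h : AddSubgroup k) (hcard : Nat.card h = q / 2)
    (s : k) (hs : s ≠ 0) :
    ∃ t : k, t ∉ h ∧ s * t⁻¹ ∉ h := by
  have hhalf : 2 * (h : Set k).ncard ≤ Nat.card k := by
    rw [← Nat.card_coe_set_eq, SetLike.coe_sort_coe, hcard, hq]
    exact Nat.mul_div_le q 2
  exact exists_teichmuller_pair_outside_subgroup_general (Set.toFinite _) h.zero_mem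
    (encard_le_encard_compl_of_two_mul_ncard_le hhalf) hs
end
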